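/- Let N, s, M be natural numbers with N = s·M and s, M > 0, let π : ZMod N → ZMod M be the reduction homomorphism, let B ⊆ ZMod N be a transversal for π with section β : ZMod M → ZMod N, and let σ : ZMod N → ℂ satisfy 𝓕_N σ = s·1_B. Then for h : ZMod M → ℂ and H : ZMod N → ℂ, the equivalent-kernel condition h = ↓_s(σ ⋆ H) holds if and only if 𝓕_M h (k) = 𝓕_N H (β k) for every k : ZMod M; in particular, only the values of the DFT of H on the band B determine whether H is an equivalent high-resolution kernel for h. -/

import Mathlib

open ZMod Finset

noncomputable section

/-- Circular convolution on `ZMod N`: `(f ⋆ g)(n) = ∑ m, f m * g (n - m)`. -/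
def cconv {N : ℕ} [NeZero N] (f g : ZMod N → ℂ) : ZMod N → ℂ :=
  fun n => ∑ m : ZMod N, f m * g (n - m)

/-- Decimation operator `↓_s : (ZMod N → ℂ) → (ZMod M → ℂ)`, `(↓_s f)(k) = f (s * k.val)`. -/
def decim (N M s : ℕ) (f : ZMod N → ℂ) : ZMod M → ℂ :=
  fun k => f ((s * k.val : ℕ) : ZMod N)

/-- `B` is a transversal for `π`: each fiber of `π` contains exactly one element of `B`. -/
def IsTransversal {N M : ℕ} (π : ZMod N → ZMod M) (B : Set (ZMod N)) : Prop :=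
  ∀ k : ZMod M, ∃! x : ZMod N, x ∈ B ∧ π x = k

/-!
By Fourier inversion on `ZMod (s * M)`, keeping only the samples at multiples of `s` merges all
frequencies with the same residue mod `M`, since `exp (2πi x s j / (s M))` depends only on
`x mod M`. So the DFT of `↓_s (σ ⋆ H)` at `k` is `s⁻¹` times the sum of `𝓕 σ * 𝓕 H` over the fiber
of `k`. As `𝓕 σ = s • 1_B` and `B` meets that fiber only in `β k`, what survives is `𝓕 H (β k)`,
and the equivalence is injectivity of the DFT.
-/

theorem dft_cconv {N : ℕ} [NeZero N] (f g : ZMod N → ℂ) : 𝓕 (cconv f g) = 𝓕 f * 𝓕 g := by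
  ext k
  calc 𝓕 (cconv f g) k
    _ = ∑ m, ∑ j, stdAddChar (-(j * k)) * (f m * g (j - m)) := by
        simp only [dft_apply, cconv, smul_eq_mul, mul_sum]
        exact sum_comm
    _ = ∑ m, ∑ j, stdAddChar (-((j + m) * k)) * (f m * g j) := by
        refine sum_congr rfl fun m _ => ?_
        rw [← Equiv.sum_comp (Equiv.addRight m)]
        simp only [Equiv.coe_addRight, add_sub_cancel_right]
    _ = ∑ m, ∑ j, stdAddChar (-(m * k)) * f m * (stdAddChar (-(j * k)) * g j) := by
        refine sum_congr rfl fun m _ => sum_congr rfl fun j _ => ?_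
        rw [add_mul, neg_add, AddChar.map_add_eq_mul]
        ring
    _ = (𝓕 f * 𝓕 g) k := by
        simp only [Pi.mul_apply, dft_apply, smul_eq_mul, sum_mul_sum]

theorem IsTransversal.sum_fiber_indicator {N M : ℕ} [NeZero N] {A : Type*} [AddCommMonoid A]
    {π : ZMod N → ZMod M} {B : Set (ZMod N)} (hB : IsTransversal π B) {b : ZMod N} (hb : b ∈ B)
    (F : ZMod N → A) : ∑ x with π x = π b, B.indicator F x = F b := by
  have eq_zero_of_ne : ∀ x ∈ univ.filter (π · = π b), x ≠ b → B.indicator F x = 0 :=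
    fun x hx hxb => Set.indicator_of_notMem
      (fun hxB => hxb ((hB (π b)).unique ⟨hxB, (mem_filter.mp hx).2⟩ ⟨hb, rfl⟩)) F
  rw [sum_eq_single_of_mem b (by simp) eq_zero_of_ne, Set.indicator_of_mem hb]

section Decimation

variable {s M : ℕ} [NeZero s] [NeZero M]

theorem stdAddChar_intCast_mul (j : ℤ) :
    stdAddChar ((s * j : ℤ) : ZMod (s * M)) = stdAddChar (j : ZMod M) := by
  have hs : (s : ℂ) ≠ 0 := NeZero.ne _
  rw [stdAddChar_coe, stdAddChar_coe]
  congr 1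
  push_cast
  rw [mul_left_comm, mul_div_mul_left _ _ hs]

theorem stdAddChar_mul_natCast_mul_val (x : ZMod (s * M)) (j : ZMod M) :
    stdAddChar (x * ((s * j.val : ℕ) : ZMod (s * M))) =
      stdAddChar (castHom (dvd_mul_left M s) (ZMod M) x * j) := by
  obtain ⟨n, rfl⟩ := intCast_surjective x
  calc stdAddChar ((n : ZMod (s * M)) * ((s * j.val : ℕ) : ZMod (s * M)))
    _ = stdAddChar ((s * (n * j.val) : ℤ) : ZMod (s * M)) := by
        push_cast
        rw [mul_left_comm]
    _ = stdAddChar ((n * j.val : ℤ) : ZMod M) := stdAddChar_intCast_mul _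
    _ = stdAddChar (castHom (dvd_mul_left M s) (ZMod M) n * j) := by
        rw [map_intCast (castHom (dvd_mul_left M s) (ZMod M)), Int.cast_mul, Int.cast_natCast,
          natCast_zmod_val]

theorem decim_eq_invDFT (f : ZMod (s * M) → ℂ) :
    decim (s * M) M s f =
      𝓕⁻ fun k => (s : ℂ)⁻¹ * ∑ x with castHom (dvd_mul_left M s) (ZMod M) x = k, 𝓕 f x := by
  ext j
  let π := castHom (dvd_mul_left M s) (ZMod M)
  calc decim (s * M) M s f j
    _ = 𝓕⁻ (𝓕 f) ((s * j.val : ℕ) : ZMod (s * M)) := by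
        rw [LinearEquiv.symm_apply_apply, decim]
    _ = ((s * M : ℕ) : ℂ)⁻¹ * ∑ x, stdAddChar (π x * j) * 𝓕 f x := by
        simp only [invDFT_apply, stdAddChar_mul_natCast_mul_val, smul_eq_mul, π]
    _ = ((s * M : ℕ) : ℂ)⁻¹ * ∑ k, stdAddChar (k * j) * ∑ x with π x = k, 𝓕 f x := by
        rw [← sum_fiberwise univ π]
        congr 1
        refine sum_congr rfl fun k _ => ?_
        rw [mul_sum]
        exact sum_congr rfl fun x hx => by rw [(mem_filter.mp hx).2]
    _ = (M : ℂ)⁻¹ * ∑ k, stdAddChar (k * j) * ((s : ℂ)⁻¹ * ∑ x with π x = k, 𝓕 f x) := by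
        simp only [mul_left_comm _ (s : ℂ)⁻¹, ← mul_sum]
        rw [Nat.cast_mul, mul_inv, mul_assoc, mul_left_comm]
    _ = 𝓕⁻ (fun k => (s : ℂ)⁻¹ * ∑ x with π x = k, 𝓕 f x) j := by
        simp only [invDFT_apply, smul_eq_mul]

theorem dft_decim (f : ZMod (s * M) → ℂ) (k : ZMod M) :
    𝓕 (decim (s * M) M s f) k =
      (s : ℂ)⁻¹ * ∑ x with castHom (dvd_mul_left M s) (ZMod M) x = k, 𝓕 f x := by
  rw [decim_eq_invDFT, LinearEquiv.apply_symm_apply]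

theorem dft_decim_cconv_of_dft_eq_indicator {B : Set (ZMod (s * M))}
    (hB : IsTransversal (castHom (dvd_mul_left M s) (ZMod M)) B) {σ : ZMod (s * M) → ℂ}
    (hσ : ∀ m, 𝓕 σ m = s * B.indicator 1 m) (H : ZMod (s * M) → ℂ) {b : ZMod (s * M)}
    (hb : b ∈ B) :
    𝓕 (decim (s * M) M s (cconv σ H)) (castHom (dvd_mul_left M s) (ZMod M) b) = 𝓕 H b := by
  have hs : (s : ℂ) ≠ 0 := NeZero.ne _
  have dft_mul : ∀ x, (𝓕 σ * 𝓕 H) x = s * B.indicator (𝓕 H) x := fun x => by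
    rw [Pi.mul_apply, hσ, mul_assoc, ← Set.indicator_mul_left, Pi.one_def]
    simp only [one_mul]
  rw [dft_decim, dft_cconv, sum_congr rfl fun x _ => dft_mul x, ← mul_sum,
    hB.sum_fiber_indicator hb, inv_mul_cancel_left₀ hs]

end Decimation

/-- The equivalent-kernel condition `h = ↓_s (σ ⋆ H)` holds iff the DFT of `h` agrees with
the DFT of `H` on the band `B` (via the section `β`). -/
theorem equivalent_kernel_iff (N s M : ℕ) [NeZero N] [NeZero M]
    (hs : 0 < s) (hM : 0 < M) (hN : N = s * M)
    (B : Set (ZMod N))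
    (hB : IsTransversal (ZMod.castHom (show M ∣ N from ⟨s, by rw [hN]; ring⟩) (ZMod M)) B)
    (β : ZMod M → ZMod N)
    (hβ : ∀ k : ZMod M, β k ∈ B ∧
      ZMod.castHom (show M ∣ N from ⟨s, by rw [hN]; ring⟩) (ZMod M) (β k) = k)
    (σ : ZMod N → ℂ)
    (hσ : ∀ m : ZMod N, 𝓕 σ m = (s : ℂ) * Set.indicator B (1 : ZMod N → ℂ) m)
    (h : ZMod M → ℂ) (H : ZMod N → ℂ) :
    h = decim N M s (cconv σ H) ↔ ∀ k : ZMod M, 𝓕 h k = 𝓕 H (β k) := by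
  subst hN
  have : NeZero s := ⟨hs.ne'⟩
  have dft_rhs (k : ZMod M) : 𝓕 (decim (s * M) M s (cconv σ H)) k = 𝓕 H (β k) := by
    obtain ⟨mem_band, reduces_to⟩ := hβ k
    simpa only [reduces_to] using dft_decim_cconv_of_dft_eq_indicator hB hσ H mem_band
  rw [← dft.injective.eq_iff, funext_iff]
  simp only [dft_rhs]

end
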